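/- Let R be a commutative noetherian local ring of Krull dimension d, let a be an element of R and n an integer. Suppose that a·Ext_R^i(M,N) = 0 for all integers i with n ≤ i ≤ n+2d and all finitely generated R-modules M and N of finite length. Then a^{2^{2d}}·Ext_R^n(M,N) = 0 for all finitely generated R-modules M and N. -/

import Mathlib

open CategoryTheory IsLocalRing

noncomputable section

/-- The `i`-th Tor module of two `R`-modules, as an object of `ModuleCat R`. -/
def TorMod (R : Type) [CommRing R] (i : ℕ) (M N : ModuleCat.{0} R) : ModuleCat.{0} R :=
  ((Tor (ModuleCat.{0} R) i).obj M).obj N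

/-- The `i`-th Ext module of two `R`-modules, as an object of `ModuleCat R`. -/
def ExtMod (R : Type) [CommRing R] (i : ℕ) (M N : ModuleCat.{0} R) : ModuleCat.{0} R :=
  ((Ext R (ModuleCat.{0} R) i).obj (Opposite.op M)).obj N

/-- Integer-indexed Tor: `Tor_n = 0` for `n < 0`. -/
def TorZ (R : Type) [CommRing R] (n : ℤ) (M N : ModuleCat.{0} R) : ModuleCat.{0} R :=
  if 0 ≤ n then TorMod R n.toNat M N else ModuleCat.of R PUnit

/-- Integer-indexed Ext: `Ext^n = 0` for `n < 0`. -/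
def ExtZ (R : Type) [CommRing R] (n : ℤ) (M N : ModuleCat.{0} R) : ModuleCat.{0} R :=
  if 0 ≤ n then ExtMod R n.toNat M N else ModuleCat.of R PUnit

/-- The depth of a module `N` over a local ring `S`, defined as the infimum of the set of
integers `i` such that `Ext^i(k, N) ≠ 0`, where `k` is the residue field of `S`
(`⊤` if no such `i` exists). -/
def moduleDepth (S : Type) [CommRing S] [IsLocalRing S] (N : Type) [AddCommGroup N]
    [Module S N] : ℕ∞ :=
  sInf {i : ℕ∞ | ∃ j : ℕ, i = (j : ℕ∞) ∧
    Nontrivial (ExtMod S j (ModuleCat.of S (ResidueField S)) (ModuleCat.of S N))}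

/-- A local ring is regular if it is noetherian and its maximal ideal can be generated by
(Krull dimension of `S`)-many elements. -/
def IsRegularLocal (S : Type) [CommRing S] [IsLocalRing S] : Prop :=
  IsNoetherianRing S ∧ ∃ s : Finset S, Ideal.span (s : Set S) = maximalIdeal S ∧
    (s.card : WithBot ℕ∞) = ringKrullDim S

/-- A local ring is Cohen-Macaulay if its depth (as a module over itself) equals its
Krull dimension. -/
def IsCMLocalRing (R : Type) [CommRing R] [IsLocalRing R] : Prop :=
  (moduleDepth R R : WithBot ℕ∞) = ringKrullDim R

/-- A module `M` over a local ring `R` is maximal Cohen-Macaulay if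
`depth M_p ≥ dim R_p` for every prime ideal `p` of `R`. -/
def IsMCMModule (R : Type) [CommRing R] [IsLocalRing R] (M : Type) [AddCommGroup M]
    [Module R M] : Prop :=
  ∀ (p : Ideal R) [p.IsPrime],
    ringKrullDim (Localization.AtPrime p) ≤
      (moduleDepth (Localization.AtPrime p) (LocalizedModule p.primeCompl M) : WithBot ℕ∞)

/-- Membership in `CM(R)`: finitely generated maximal Cohen-Macaulay modules. -/
def MemCM (R : Type) [CommRing R] [IsLocalRing R] (M : ModuleCat.{0} R) : Prop :=
  Module.Finite R M ∧ IsMCMModule R M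

/-- Membership in `CM₀(R)`: finitely generated maximal Cohen-Macaulay modules that are
locally free on the punctured spectrum. -/
def MemCM0 (R : Type) [CommRing R] [IsLocalRing R] (M : ModuleCat.{0} R) : Prop :=
  Module.Finite R M ∧ IsMCMModule R M ∧
    ∀ (p : Ideal R) [p.IsPrime], p ≠ maximalIdeal R →
      Module.Free (Localization.AtPrime p) (LocalizedModule p.primeCompl M)

/-- The singular locus of `R`: primes `p` such that `R_p` is not regular. -/
def singularLocus (R : Type) [CommRing R] : Set (PrimeSpectrum R) :=
  {p | ¬ IsRegularLocal (Localization.AtPrime p.asIdeal)}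

/-- The nonfree locus of a module `M`: primes `p` such that `M_p` is not a free
`R_p`-module. -/
def nonfreeLocus (R : Type) [CommRing R] (M : Type) [AddCommGroup M] [Module R M] :
    Set (PrimeSpectrum R) :=
  {p | ¬ Module.Free (Localization.AtPrime p.asIdeal)
        (LocalizedModule p.asIdeal.primeCompl M)}

/-- `K` is a first syzygy of `N` in a minimal free resolution: there is a surjection
`f : R^n → N` with `ker f ⊆ m·R^n` and `K ≅ ker f`. -/
def IsMinimalSyzygy1 (R : Type) [CommRing R] [IsLocalRing R] (N K : ModuleCat.{0} R) : Prop :=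
  ∃ (n : ℕ) (f : (Fin n → R) →ₗ[R] N), Function.Surjective f ∧
    LinearMap.ker f ≤ (maximalIdeal R) • (⊤ : Submodule R (Fin n → R)) ∧
    Nonempty (K ≃ₗ[R] LinearMap.ker f)

/-- `K` is a `d`-th syzygy of `N` in a minimal free resolution. -/
def IsMinimalSyzygy (R : Type) [CommRing R] [IsLocalRing R] :
    ℕ → ModuleCat.{0} R → ModuleCat.{0} R → Prop
  | 0, N, K => Nonempty ((K : Type) ≃ₗ[R] N)
  | d + 1, N, K => ∃ L : ModuleCat.{0} R, IsMinimalSyzygy1 R N L ∧ IsMinimalSyzygy R d L K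

/-- A module is indecomposable if it is nonzero and is not isomorphic to the direct sum of
two nonzero modules. -/
def IndecomposableModule (R : Type) [CommRing R] (M : Type) [AddCommGroup M] [Module R M] :
    Prop :=
  Nontrivial M ∧ ∀ (A B : Type) [AddCommGroup A] [Module R A] [AddCommGroup B] [Module R B],
    Nonempty (M ≃ₗ[R] A × B) → (Subsingleton A ∨ Subsingleton B)

/-!
An element `a` that kills `Ext^n` of finite length modules kills `Ext^n(M, N)` for all finitely
generated `M` and `N`, for the following reason. Let `m` be a maximal ideal. The Artin–Rees lemma,
carried up the degrees by dimension shifting along free presentations of `M`, shows two things. If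
`N` is killed by a power of `m`, then every class in `Ext^n(M, N)` restricts to zero on some
`m^k M`, hence comes from `Ext^n(M / m^k M, N)`; so `a` kills `Ext^n(M, N)` if `N` has moreover
finite length. For arbitrary `N`, the image of `Ext^n(M, m^k N)` in `Ext^n(M, N)` lies in
`m^j Ext^n(M, N)` once `k` is large. Given `e ∈ Ext^n(M, N)`, the class `a e` vanishes in
`Ext^n(M, N / m^k N)` for all `k`, so it lies in `m^j Ext^n(M, N)` for all `m` and `j`, and it is
zero by the Krull intersection theorem.
-/

universe w v u t

section PowSMulTop

variable {R M N : Type*} [CommRing R] [AddCommGroup M] [Module R M] [AddCommGroup N] [Module R N]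

lemma map_smul_top_of_surjective (I : Ideal R) {f : M →ₗ[R] N} (hf : Function.Surjective f) :
    (I • (⊤ : Submodule R M)).map f = I • ⊤ := by
  rw [Submodule.map_smul'', Submodule.map_top, LinearMap.range_eq_top.2 hf]

lemma mem_smul_top_pi {ι : Type*} [Finite ι] (I : Ideal R) {x : ι → M}
    (hx : ∀ i, x i ∈ I • (⊤ : Submodule R M)) : x ∈ I • (⊤ : Submodule R (ι → M)) := by
  classical
  have := Fintype.ofFinite ι
  rw [← Finset.univ_sum_single x]
  exact Submodule.sum_mem _ fun i _ ↦
    Submodule.smul_top_le_comap_smul_top I (LinearMap.single R (fun _ ↦ M) i) (hx i)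

lemma le_annihilator_quotient_smul_top (I : Ideal R) :
    I ≤ Module.annihilator R (M ⧸ (I • ⊤ : Submodule R M)) := by
  rw [Submodule.annihilator_quotient]
  exact fun r hr ↦ Submodule.mem_colon.2 fun x hx ↦ Submodule.smul_mem_smul hr hx

variable [IsNoetherianRing R] (I : Ideal R)

lemma exists_comap_pow_smul_top_le [Module.Finite R N] {f : M →ₗ[R] N}
    (hf : Function.Injective f) (j : ℕ) : ∃ k, (I ^ k • ⊤ : Submodule R N).comap f ≤ I ^ j • ⊤ := by
  obtain ⟨k, hk⟩ := I.exists_pow_inf_eq_pow_smul (LinearMap.range f)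
  refine ⟨j + k, ?_⟩
  calc (I ^ (j + k) • ⊤ : Submodule R N).comap f
    _ = (I ^ (j + k) • ⊤ ⊓ LinearMap.range f).comap f := by
      ext x; simp
    _ = (I ^ j • (I ^ k • ⊤ ⊓ LinearMap.range f)).comap f := by
      rw [hk _ le_add_self, Nat.add_sub_cancel]
    _ ≤ (I ^ j • LinearMap.range f).comap f :=
      Submodule.comap_mono (smul_mono_right _ inf_le_right)
    _ = I ^ j • ⊤ := by
      rw [← Submodule.map_top, ← Submodule.map_smul'', Submodule.comap_map_eq_of_injective hf]

lemma exists_forall_linearMap_mem_pow_smul_top [Module.Finite R M] [Module.Finite R N] (j : ℕ) :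
    ∃ k, ∀ f : M →ₗ[R] N, (∀ x, f x ∈ I ^ k • (⊤ : Submodule R N)) →
      f ∈ I ^ j • (⊤ : Submodule R (M →ₗ[R] N)) := by
  obtain ⟨r, s, hs⟩ := Module.Finite.exists_fin (R := R) (M := M)
  let eval : (M →ₗ[R] N) →ₗ[R] (Fin r → N) := LinearMap.pi fun i ↦ LinearMap.applyₗ (s i)
  have eval_injective : Function.Injective eval := fun f g h ↦
    LinearMap.ext_on_range hs fun i ↦ congrFun h i
  obtain ⟨k, hk⟩ := exists_comap_pow_smul_top_le I eval_injective j
  exact ⟨k, fun f hf ↦ hk (mem_smul_top_pi _ fun i ↦ hf (s i))⟩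

lemma eq_zero_of_forall_mem_pow_smul_top [Module.Finite R M] {x : M}
    (hx : ∀ m : Ideal R, m.IsMaximal → ∀ k, x ∈ m ^ k • (⊤ : Submodule R M)) : x = 0 := by
  by_contra hx0
  obtain ⟨m, hm, hle⟩ := Ideal.exists_le_maximal (Ideal.torsionOf R M x)
    (mt (Ideal.torsionOf_eq_top_iff _ x).1 hx0)
  obtain ⟨r, hr⟩ := (m.mem_iInf_smul_pow_eq_bot_iff x).1 (Submodule.mem_iInf _ |>.2 (hx m hm))
  have one_sub_mem : (1 - r : R) ∈ m := hle (by
    rw [Ideal.mem_torsionOf_iff, sub_smul, one_smul, hr, sub_self])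
  exact hm.ne_top ((Ideal.eq_top_iff_one m).2 (by simpa using m.add_mem one_sub_mem r.2))

lemma isArtinianRing_quotient_pow (m : Ideal R) [hm : m.IsMaximal] (k : ℕ) :
    IsArtinianRing (R ⧸ m ^ k) := by
  refine isArtinianRing_iff_krullDimLE_zero.2 (.mk₀ fun p hp ↦ ?_)
  have le_comap : m ≤ p.comap (algebraMap R (R ⧸ m ^ k)) := by
    refine Ideal.IsPrime.le_of_pow_le (n := k) fun r hr ↦ ?_
    simp [Ideal.Quotient.eq_zero_iff_mem.2 hr]
  have comap_eq := hm.eq_of_le Ideal.IsPrime.ne_top' le_comap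
  exact Ideal.IsIntegral.isMaximal_of_isMaximal_comap (R := R) p (comap_eq ▸ hm)

lemma isFiniteLength_quotient_pow_smul_top (m : Ideal R) [m.IsMaximal] [Module.Finite R M] (k : ℕ) :
    IsFiniteLength R (M ⧸ (m ^ k • ⊤ : Submodule R M)) := by
  have := isArtinianRing_quotient_pow m k
  have : IsArtinian R (M ⧸ (m ^ k • ⊤ : Submodule R M)) :=
    isArtinian_of_surjective_algebraMap (R := R ⧸ m ^ k) Ideal.Quotient.mk_surjective
  exact isFiniteLength_iff_isNoetherian_isArtinian.2 ⟨inferInstance, this⟩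

end PowSMulTop

section ShortExact

open Abelian

lemma mk₀_comp_extClass_comp_eq_zero {C : Type u} [Category.{v} C] [Abelian C] [HasExt.{w} C]
    {S T : ShortComplex C} (hS : S.ShortExact) (hT : T.ShortExact) (f : T ⟶ S) {Y : C} {n : ℕ}
    (e : Ext S.X₁ Y n) (he : (Ext.mk₀ f.τ₁).comp e (zero_add n) = 0) :
    (Ext.mk₀ f.τ₃).comp (hS.extClass.comp e (add_comm 1 n)) (zero_add (n + 1)) = 0 := by
  rw [← Ext.comp_assoc _ _ _ (zero_add 1) (add_comm 1 n) (by omega), ← hT.extClass_naturality hS f,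
    Ext.comp_assoc _ _ _ (add_zero 1) (zero_add n) (by omega), he, Ext.comp_zero]

lemma shortExact_subtype_mkQ {R : Type u} [Ring R] {M : Type v} [AddCommGroup M] [Module R M]
    (P : Submodule R M) :
    (ModuleCat.shortComplexOfCompEqZero P.subtype P.mkQ (by ext; simp)).ShortExact :=
  ModuleCat.shortComplex_shortExact _ (LinearMap.exact_subtype_mkQ P) P.subtype_injective
    P.mkQ_surjective

lemma mk₀_subtype_map_comp_extClass_comp_eq_zero {R : Type u} [Ring R] [Small.{v} R]
    {F M : Type v} [AddCommGroup F] [Module R F] [AddCommGroup M] [Module R M]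
    {π : F →ₗ[R] M} (hπ : Function.Surjective π)
    {N : ModuleCat.{v} R} {n : ℕ} (e : Ext (ModuleCat.of R (LinearMap.ker π)) N n)
    {K : Submodule R (LinearMap.ker π)}
    (he : (Ext.mk₀ (ModuleCat.ofHom K.subtype)).comp e (zero_add n) = 0)
    {Q : Submodule R F} (hQ : Q.comap (LinearMap.ker π).subtype ≤ K) :
    (Ext.mk₀ (ModuleCat.ofHom (Q.map π).subtype)).comp
      ((LinearMap.shortExact_shortComplexKer hπ).extClass.comp e (add_comm 1 n))
      (zero_add (n + 1)) = 0 := by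
  let ρ : Q →ₗ[R] Q.map π := π.submoduleMap Q
  let kerToK : LinearMap.ker ρ →ₗ[R] K :=
    { toFun x := ⟨⟨x.1.1, congrArg Subtype.val x.2⟩, hQ x.1.2⟩
      map_add' _ _ := rfl
      map_smul' _ _ := rfl }
  let inclusion : ρ.shortComplexKer ⟶ π.shortComplexKer :=
    { τ₁ := ModuleCat.ofHom kerToK ≫ ModuleCat.ofHom K.subtype
      τ₂ := ModuleCat.ofHom Q.subtype
      τ₃ := ModuleCat.ofHom (Q.map π).subtype }
  have hρ := LinearMap.shortExact_shortComplexKer (π.submoduleMap_surjective Q)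
  refine mk₀_comp_extClass_comp_eq_zero (LinearMap.shortExact_shortComplexKer hπ) hρ inclusion e ?_
  rw [← Ext.mk₀_comp_mk₀_assoc, he, Ext.comp_zero]

end ShortExact

section ArtinRees

open Abelian

variable {R : Type u} [CommRing R] [Small.{v} R] [IsNoetherianRing R] {I : Ideal R}

lemma exists_mk₀_subtype_comp_eq_zero {c : ℕ} {N : ModuleCat.{v} R}
    (hN : I ^ c ≤ Module.annihilator R N) {n : ℕ} {M : ModuleCat.{v} R} [Module.Finite R M]
    (e : Ext M N n) :
    ∃ k, (Ext.mk₀ (ModuleCat.ofHom (I ^ k • ⊤ : Submodule R M).subtype)).comp e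
      (zero_add n) = 0 := by
  induction n generalizing M with
  | zero =>
    obtain ⟨f, rfl⟩ := Ext.mk₀_bijective _ _ |>.2 e
    have pow_smul_top_le_ker : I ^ c • ⊤ ≤ LinearMap.ker f.hom :=
      Submodule.smul_le.2 fun r hr x _ ↦ by
        rw [LinearMap.mem_ker, map_smul, Module.mem_annihilator.1 (hN hr)]
    refine ⟨c, ?_⟩
    rw [Ext.mk₀_comp_mk₀, Ext.mk₀_eq_zero_iff]
    ext x
    exact pow_smul_top_le_ker x.2
  | succ n ih =>
    obtain ⟨F, _, _, _, _, π, hπ⟩ := Module.exists_finite_presentation R M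
    obtain ⟨e, rfl⟩ := precomp_extClass_surjective_of_projective_X₂ N
      (LinearMap.shortExact_shortComplexKer hπ) n e
    obtain ⟨j, hj⟩ := ih e
    obtain ⟨k, hk⟩ := exists_comap_pow_smul_top_le I (LinearMap.ker π).subtype_injective j
    refine ⟨k, ?_⟩
    rw [← map_smul_top_of_surjective (I ^ k) hπ]
    exact mk₀_subtype_map_comp_extClass_comp_eq_zero hπ e hj hk

lemma exists_mk₀_mkQ_comp_eq {c : ℕ} {M N : ModuleCat.{v} R} [Module.Finite R M]
    (hN : I ^ c ≤ Module.annihilator R N) {n : ℕ} (e : Ext M N n) :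
    ∃ (k : ℕ) (e' : Ext (ModuleCat.of R (M ⧸ (I ^ k • ⊤ : Submodule R M))) N n),
      (Ext.mk₀ (ModuleCat.ofHom (I ^ k • ⊤ : Submodule R M).mkQ)).comp e' (zero_add n) = e := by
  obtain ⟨k, hk⟩ := exists_mk₀_subtype_comp_eq_zero hN e
  exact ⟨k, Ext.contravariant_sequence_exact₂ (shortExact_subtype_mkQ _) N e hk⟩

variable (I) in
lemma exists_forall_comp_mk₀_subtype_mem_pow_smul_top (M N : ModuleCat.{v} R) [Module.Finite R M]
    [Module.Finite R N] (n j : ℕ) :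
    ∃ k, ∀ e : Ext M (ModuleCat.of R (I ^ k • ⊤ : Submodule R N)) n,
      e.comp (Ext.mk₀ (ModuleCat.ofHom (I ^ k • ⊤ : Submodule R N).subtype)) (add_zero n) ∈
        I ^ j • (⊤ : Submodule R (Ext M N n)) := by
  induction n generalizing M with
  | zero =>
    obtain ⟨k, hk⟩ := exists_forall_linearMap_mem_pow_smul_top (M := M) (N := N) I j
    refine ⟨k, fun e ↦ ?_⟩
    obtain ⟨f, rfl⟩ := Ext.mk₀_bijective _ _ |>.2 e
    have mem := hk ((I ^ k • ⊤ : Submodule R N).subtype ∘ₗ f.hom) fun x ↦ (f x).2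
    rw [Ext.mk₀_comp_mk₀]
    exact Submodule.smul_top_le_comap_smul_top _
      (ModuleCat.homLinearEquiv.symm ≪≫ₗ (Ext.linearEquiv₀ (R := R)).symm).toLinearMap mem
  | succ n ih =>
    obtain ⟨F, _, _, _, _, π, hπ⟩ := Module.exists_finite_presentation R M
    have hS := LinearMap.shortExact_shortComplexKer hπ
    obtain ⟨k, hk⟩ := ih (ModuleCat.of R (LinearMap.ker π))
    refine ⟨k, fun e ↦ ?_⟩
    obtain ⟨e, rfl⟩ := precomp_extClass_surjective_of_projective_X₂ _ hS n e
    have mem := Submodule.smul_top_le_comap_smul_top (I ^ j)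
      (hS.extClass.precompOfLinear R N (add_comm 1 n)) (hk e)
    rwa [Ext.bilinearComp_apply_apply, Ext.comp_assoc_of_third_deg_zero]

end ArtinRees

section Annihilation

open Abelian

variable {R : Type u} [CommRing R] [Small.{v} R] [IsNoetherianRing R] {a : R} {n : ℕ}
  {M N : ModuleCat.{v} R} [Module.Finite R M]

lemma smul_ext_eq_zero_of_pow_le_annihilator {m : Ideal R} [m.IsMaximal] {c : ℕ}
    (hN : m ^ c ≤ Module.annihilator R N)
    (h : ∀ M : ModuleCat.{v} R, IsFiniteLength R M → ∀ e : Ext M N n, a • e = 0) (e : Ext M N n) :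
    a • e = 0 := by
  obtain ⟨k, e, rfl⟩ := exists_mk₀_mkQ_comp_eq hN e
  rw [← Ext.comp_smul, h _ (isFiniteLength_quotient_pow_smul_top m k), Ext.comp_zero]

lemma smul_ext_eq_zero_of_isFiniteLength [Module.Finite R N]
    (h : ∀ M N : ModuleCat.{v} R, IsFiniteLength R M → IsFiniteLength R N →
      ∀ e : Ext M N n, a • e = 0) (e : Ext M N n) : a • e = 0 := by
  refine eq_zero_of_forall_mem_pow_smul_top (R := R) fun m hm j ↦ ?_
  obtain ⟨k, hk⟩ := exists_forall_comp_mk₀_subtype_mem_pow_smul_top m M N n j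
  let Nk : Submodule R N := m ^ k • ⊤
  have hNk : (a • e).comp (Ext.mk₀ (ModuleCat.ofHom Nk.mkQ)) (add_zero n) = 0 := by
    rw [Ext.smul_comp]
    exact smul_ext_eq_zero_of_pow_le_annihilator (le_annihilator_quotient_smul_top (m ^ k))
      (fun L hL ↦ h L _ hL (isFiniteLength_quotient_pow_smul_top m k)) _
  obtain ⟨e', he'⟩ := Ext.covariant_sequence_exact₂ M (shortExact_subtype_mkQ Nk) (a • e) hNk
  exact he' ▸ hk e'

end Annihilation

section Comparison

open Abelian

variable {C : Type u} [Category.{v} C] [Abelian C] [HasExt.{w} C] {X Y : C}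
  (P : ProjectiveResolution X)

lemma extMk_zero_eq_zero_iff (f : P.complex.X 0 ⟶ Y) (hf : P.complex.d 1 0 ≫ f = 0) :
    P.extMk f 1 rfl hf = 0 ↔ f = 0 := by
  refine ⟨fun h ↦ ?_, by rintro rfl; simp⟩
  rw [← P.extEquivCohomologyClass.apply_eq_iff_eq, P.extEquivCohomologyClass_extMk,
    P.extEquivCohomologyClass_zero, CochainComplex.HomComplex.CohomologyClass.mk_eq_zero_iff,
    CochainComplex.HomComplex.Cocycle.toSingleMk_mem_coboundaries_iff _ _ _ _ _ 1 (by simp)] at h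
  obtain ⟨g, hg⟩ := h
  rw [(CochainComplex.isZero_of_isStrictlyLE P.cochainComplex 0 1).eq_of_src g 0,
    Limits.comp_zero] at hg
  exact (cancel_epi (P.cochainComplexXIso _ 0 rfl).hom).1 (hg.symm.trans Limits.comp_zero.symm)

lemma extMk_eq_zero_iff_exists_prev {n : ℕ} (f : P.complex.X n ⟶ Y) (m : ℕ) (hm : n + 1 = m)
    (hf : P.complex.d m n ≫ f = 0) :
    P.extMk f m hm hf = 0 ↔
      ∃ g : P.complex.X ((ComplexShape.up ℕ).prev n) ⟶ Y,
        P.complex.d n ((ComplexShape.up ℕ).prev n) ≫ g = f := by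
  subst hm
  cases n with
  | zero => simp [extMk_zero_eq_zero_iff P f hf, eq_comm (a := f)]
  | succ n =>
    rw [CochainComplex.prev_nat_succ]
    exact P.extMk_eq_zero_iff f _ rfl hf n rfl

variable {R : Type t} [CommRing R] [Linear R C]

lemma smul_extMk (r : R) {n : ℕ} (f : P.complex.X n ⟶ Y) (m : ℕ) (hm : n + 1 = m)
    (hf : P.complex.d m n ≫ f = 0) :
    r • P.extMk f m hm hf = P.extMk (r • f) m hm (by rw [Linear.comp_smul, hf, smul_zero]) := by
  simp only [Ext.smul_eq_comp_mk₀, P.extMk_comp_mk₀, Linear.comp_smul, Category.comp_id]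

variable (R Y) in
/-- The map sending an `n`-cocycle of `Hom(P, Y)`, for `P` a projective resolution of `X`, to the
class in `Abelian.Ext X Y n` that it represents. -/
def cocyclesToExt (n : ℕ) :
    LinearMap.ker ((P.complex.linearYonedaObj R Y).sc n).g.hom →ₗ[R] Abelian.Ext X Y n where
  toFun f := P.extMk f.1 ((ComplexShape.up ℕ).next n) (CochainComplex.next ℕ n).symm f.2
  map_add' _ _ := (P.add_extMk ..).symm
  map_smul' r _ := (smul_extMk P r ..).symm

lemma cocyclesToExt_surjective (n : ℕ) : Function.Surjective (cocyclesToExt Y P R n) := by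
  intro x
  obtain ⟨f, hf, rfl⟩ := P.extMk_surjective x _ (CochainComplex.next ℕ n).symm
  exact ⟨⟨f, hf⟩, rfl⟩

lemma ker_cocyclesToExt (n : ℕ) :
    LinearMap.ker (cocyclesToExt Y P R n) =
      LinearMap.range ((P.complex.linearYonedaObj R Y).sc n).moduleCatToCycles := by
  ext f
  refine (extMk_eq_zero_iff_exists_prev P f.1 _ (CochainComplex.next ℕ n).symm f.2).trans ?_
  exact exists_congr fun g ↦ ⟨fun h ↦ Subtype.ext h, fun h ↦ congrArg Subtype.val h⟩

variable (R Y) in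
/-- The `n`-th cohomology of `Hom(P, Y)`, for `P` a projective resolution of `X`, is
`Abelian.Ext X Y n`. -/
def homologyLinearYonedaEquivExt (n : ℕ) :
    (P.complex.linearYonedaObj R Y).homology n ≃ₗ[R] Abelian.Ext X Y n :=
  ((P.complex.linearYonedaObj R Y).sc n).moduleCatHomologyIso.toLinearEquiv ≪≫ₗ
    Submodule.quotEquivOfEq _ _ (ker_cocyclesToExt P n).symm ≪≫ₗ
    (cocyclesToExt Y P R n).quotKerEquivOfSurjective (cocyclesToExt_surjective P n)

end Comparison

section ExtZ

variable (R : Type) [CommRing R] (n : ℕ) (M N : ModuleCat.{0} R)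

/-- The derived functor `ExtMod` agrees with `Abelian.Ext`, which is defined by morphisms in the
derived category and carries the Yoneda product. -/
def extModEquivExt : ExtMod R n M N ≃ₗ[R] Abelian.Ext M N n :=
  ((projectiveResolution M).isoExt n N).toLinearEquiv ≪≫ₗ
    homologyLinearYonedaEquivExt N (projectiveResolution M) R n

variable {R n M N}

lemma forall_smul_extZ_eq_zero_iff {a : R} :
    (∀ x : ExtZ R n M N, a • x = 0) ↔ ∀ e : Abelian.Ext M N n, a • e = 0 := by
  rw [← Module.mem_annihilator, ← Module.mem_annihilator, ExtZ, if_pos n.cast_nonneg,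
    Int.toNat_natCast, (extModEquivExt R n M N).annihilator_eq]

lemma subsingleton_extZ_of_neg {n : ℤ} (hn : n < 0) : Subsingleton (ExtZ R n M N) := by
  rw [ExtZ, if_neg hn.not_ge]
  infer_instance

end ExtZ

theorem stmt4_general (R : Type) [CommRing R] [IsNoetherianRing R] (a : R) (n : ℤ)
    (h : ∀ M N : ModuleCat.{0} R, IsFiniteLength R M → IsFiniteLength R N →
      ∀ x : ExtZ R n M N, a • x = 0) :
    ∀ M N : ModuleCat.{0} R, Module.Finite R M → Module.Finite R N →
      ∀ x : ExtZ R n M N, a • x = 0 := by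
  intro M N _ _
  obtain hn | hn := lt_or_ge n 0
  · have := subsingleton_extZ_of_neg (M := M) (N := N) hn
    exact fun _ ↦ Subsingleton.elim _ _
  · lift n to ℕ using hn
    simp only [forall_smul_extZ_eq_zero_iff] at h ⊢
    exact smul_ext_eq_zero_of_isFiniteLength h

/-- Let `R` be a commutative noetherian local ring of Krull dimension `d`,
`a ∈ R` and `n ∈ ℤ`. If `a · Ext^i(M,N) = 0` for all `n ≤ i ≤ n + 2d` and all finite-length
modules `M, N`, then `a^(2^(2d)) · Ext^n(M,N) = 0` for all finitely generated `M, N`. -/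
theorem stmt4 (R : Type) [CommRing R] [IsNoetherianRing R] [IsLocalRing R]
    (d : ℕ) (hd : ringKrullDim R = (d : WithBot ℕ∞)) (a : R) (n : ℤ)
    (h : ∀ i : ℤ, n ≤ i → i ≤ n + 2 * d → ∀ M N : ModuleCat.{0} R,
        IsFiniteLength R M → IsFiniteLength R N → ∀ x : ExtZ R i M N, a • x = 0) :
    ∀ M N : ModuleCat.{0} R, Module.Finite R M → Module.Finite R N →
      ∀ x : ExtZ R n M N, (a ^ (2 ^ (2 * d))) • x = 0 := by
  intro M N hM hN x
  rw [← Nat.sub_add_cancel (Nat.one_le_two_pow (n := 2 * d)), pow_succ, mul_smul,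
    stmt4_general R a n (h n le_rfl (by omega)) M N hM hN x, smul_zero]
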